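/- Fix integers d ≥ 1 and p ≥ 1 and let σ satisfy Assumption A. Let g ∈ Π_p(ℝ^d) be a nonzero polynomial, let s = deg g, and let ĝ = (⟨g, χ_T⟩_{L²(γ_d)})_{T ∈ ℕ^d_{≤p}} be its vector of Hermite coefficients. Then there exist c₁ > 0, c₂ > 0 and ε₀ > 0 such that for all ε ∈ (0, ε₀), the matrix Φ(ε) is invertible and c₁ ε^{−s} ≤ ĝᵀ Φ(ε)^{−1} ĝ ≤ c₂ ε^{−s}. -/

import Mathlib

open MeasureTheory ProbabilityTheory

/-- The standard Gaussian measure `N(0, I_d)` on `ℝ^d`. -/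
noncomputable def gaussD (d : ℕ) : Measure (Fin d → ℝ) :=
  Measure.pi fun _ => gaussianReal 0 1

/-- The normalized (probabilists') Hermite polynomial `H_t = He_t / √(t!)` evaluated at `y`. -/
noncomputable def hermN (t : ℕ) (y : ℝ) : ℝ :=
  (Polynomial.aeval y (Polynomial.hermite t)) / Real.sqrt (Nat.factorial t)

/-- The multivariate Hermite polynomial `χ_T(x) = ∏ i, H_{T i}(x i)`. -/
noncomputable def chiH {d : ℕ} (T : Fin d → ℕ) (x : Fin d → ℝ) : ℝ :=
  ∏ i, hermN (T i) (x i)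

/-- The Hermite coefficient `φ̂_{w,b}(T) = ∫ σ(⟨w,x⟩ + b) χ_T(x) dγ_d(x)`
of the random feature `φ_{w,b}(x) = σ(⟨w,x⟩ + b)`. -/
noncomputable def phiHat (d : ℕ) (σ : ℝ → ℝ) (w : Fin d → ℝ) (b : ℝ)
    (T : Fin d → ℕ) : ℝ :=
  ∫ x, σ (∑ i, w i * x i + b) * chiH T x ∂(gaussD d)

/-- The law of a feature pair `(w, b)` with `w ∼ N(0, v I_d)` and `b ∼ N(0, v)` independent. -/
noncomputable def featMeas (d : ℕ) (v : NNReal) : Measure ((Fin d → ℝ) × ℝ) :=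
  (Measure.pi fun _ : Fin d => gaussianReal 0 v).prod (gaussianReal 0 v)

/-- The index set `ℕ^d_{≤p}` of multi-indices of total degree at most `p`
(each coordinate then being at most `p`, so we may record it in `Fin (p+1)`). -/
abbrev MIdx (d p : ℕ) := {T : Fin d → Fin (p + 1) // (∑ i, (T i : ℕ)) ≤ p}

/-- The multi-index in `ℕ^d` corresponding to an element of `MIdx d p`. -/
def MIdx.toFun {d p : ℕ} (T : MIdx d p) : Fin d → ℕ := fun i => (T.1 i : ℕ)

/-- The matrix `Φ(ε)` with entries `Φ(ε)_{T,T'} = E_{w,b}[φ̂_{w,b}(T) φ̂_{w,b}(T')]`,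
where `w ∼ N(0, ε I_d)` and `b ∼ N(0, ε)` are independent. -/
noncomputable def PhiMat (d p : ℕ) (σ : ℝ → ℝ) (ε : ℝ) :
    Matrix (MIdx d p) (MIdx d p) ℝ := fun T T' =>
  ∫ wb : (Fin d → ℝ) × ℝ,
    phiHat d σ wb.1 wb.2 T.toFun * phiHat d σ wb.1 wb.2 T'.toFun
      ∂(featMeas d ε.toNNReal)

/-- The vector of Hermite coefficients `ĝ = (⟨g, χ_T⟩_{L²(γ_d)})_{T ∈ ℕ^d_{≤p}}`
of a polynomial `G`. -/
noncomputable def hermVec (d p : ℕ) (G : MvPolynomial (Fin d) ℝ) : MIdx d p → ℝ :=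
  fun T => ∫ x, MvPolynomial.eval x G * chiH T.toFun x ∂(gaussD d)

/-!
Expanding `σ(⟨w, x⟩ + b)` in monomials `z ^ β` of `z = (w, b)` gives
`φ̂_{w,b}(T) = ∑ β, A β T * z ^ β`, where `A β T` is a nonzero multiple of `⟨x ^ α, χ_T⟩` whenever
`σ` has a nonzero coefficient of degree `|β|`, `α` being the part of `β` that belongs to `w`. Since
`z` has the law of `√ε` times a standard Gaussian vector, `Φ(ε) = (D A)ᵀ M (D A)` with
`D = diag(ε ^ (|β| / 2))` and `M` the Gram matrix of the monomials in `L²(γ_{d+1})`, which is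
positive definite and independent of `ε`.
The moment `⟨x ^ α, χ_T⟩` vanishes when `|α| ≤ |T|` and `α ≠ T`, and not when `α = T`; with the
powers of the bias completing every `α` to total degree `p`, this makes `A` injective.

For the upper bound, complete every monomial of `g` to total degree exactly `s` by a power of the
bias: then `ĝ = Aᵀ c` with `c` supported on `|β| = s`, so `ĝ = ε ^ (-s / 2) (D A)ᵀ c` and
`ĝᵀ Φ(ε)⁻¹ ĝ ≤ ε ^ (-s) cᵀ M⁻¹ c`. For the lower bound, test against the basis vector `v` of a
monomial of degree `s` occurring in `g`: `A v` is supported on `|β| ≥ s`, so `vᵀ Φ(ε) v ≤ L ε ^ s`,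
and Cauchy-Schwarz gives `(ĝᵀ v)² ≤ (ĝᵀ Φ(ε)⁻¹ ĝ) (vᵀ Φ(ε) v)`.
-/

section Gaussian

open Polynomial

lemma integrable_pow_gaussianReal (μ : ℝ) (v : NNReal) (n : ℕ) :
    Integrable (fun x ↦ x ^ n) (gaussianReal μ v) := by
  have h := (memLp_id_gaussianReal' (μ := μ) (v := v) n (by simp)).integrable_norm_pow'
  refine (integrable_norm_iff (by fun_prop)).1 ?_
  simpa only [norm_pow, id] using h

lemma integrable_aeval_gaussianReal {R : Type*} [CommSemiring R] [Algebra R ℝ]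
    (μ : ℝ) (v : NNReal) (P : R[X]) :
    Integrable (fun x ↦ aeval x P) (gaussianReal μ v) := by
  simp_rw [aeval_eq_sum_range, Algebra.smul_def]
  exact integrable_finsetSum _ fun i _ ↦ (integrable_pow_gaussianReal μ v i).const_mul _

lemma integrable_gaussianReal_iff {μ : ℝ} {v : NNReal} (hv : v ≠ 0) {f : ℝ → ℝ} :
    Integrable f (gaussianReal μ v) ↔ Integrable (fun x ↦ gaussianPDFReal μ v x * f x) := by
  rw [gaussianReal_of_var_ne_zero μ hv, integrable_withDensity_iff_integrable_smul'
    (measurable_gaussianPDF μ v) (.of_forall fun x ↦ ENNReal.ofReal_lt_top)]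
  simp only [gaussianPDF, ENNReal.toReal_ofReal (gaussianPDFReal_nonneg μ v _), smul_eq_mul]

lemma hasDerivAt_gaussianPDFReal (μ : ℝ) (v : NNReal) (x : ℝ) :
    HasDerivAt (gaussianPDFReal μ v) (-((x - μ) / v) * gaussianPDFReal μ v x) x := by
  have hexp : HasDerivAt (fun x ↦ -(x - μ) ^ 2 / (2 * v)) (-((x - μ) / v)) x := by
    refine ((((hasDerivAt_id x).sub_const μ).pow 2).neg.div_const (2 * (v : ℝ))).congr_deriv ?_
    rw [← mul_div_mul_left (x - μ) (v : ℝ) two_ne_zero]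
    simp [neg_div]
  refine (hexp.exp.const_mul (√(2 * Real.pi * v))⁻¹).congr_deriv ?_
  rw [gaussianPDFReal]
  ring

lemma integral_sub_mul_gaussianReal {μ : ℝ} {v : NNReal} {f f' : ℝ → ℝ}
    (hf : ∀ x, HasDerivAt f (f' x) x) (hfi : Integrable f (gaussianReal μ v))
    (hf'i : Integrable f' (gaussianReal μ v))
    (hxf : Integrable (fun x ↦ (x - μ) * f x) (gaussianReal μ v)) :
    ∫ x, (x - μ) * f x ∂gaussianReal μ v = v * ∫ x, f' x ∂gaussianReal μ v := by
  rcases eq_or_ne v 0 with rfl | hv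
  · simp
  have hv' : (v : ℝ) ≠ 0 := by exact_mod_cast hv
  rw [integrable_gaussianReal_iff hv] at hfi hf'i hxf
  have hzero := integral_eq_zero_of_hasDerivAt_of_integrable
    (f' := fun x ↦ gaussianPDFReal μ v x * f' x
      - (v : ℝ)⁻¹ * (gaussianPDFReal μ v x * ((x - μ) * f x)))
    (fun x ↦ ((hasDerivAt_gaussianPDFReal μ v x).mul (hf x)).congr_deriv (by ring))
    (hf'i.sub (hxf.const_mul _)) hfi
  rw [integral_sub hf'i (hxf.const_mul _), integral_const_mul, sub_eq_zero] at hzero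
  simp only [integral_gaussianReal_eq_integral_smul hv, smul_eq_mul]
  rw [hzero, mul_inv_cancel_left₀ hv']

lemma integral_pow_gaussianReal (v : NNReal) (n : ℕ) :
    ∫ x, x ^ n ∂gaussianReal 0 v = √v ^ n * ∫ x, x ^ n ∂gaussianReal 0 1 := by
  have hmap : (gaussianReal 0 1).map (√v * ·) = gaussianReal 0 v := by
    rw [gaussianReal_map_const_mul]
    congr 1
    · simp
    · ext; simp
  rw [← hmap, integral_map (by fun_prop) (by fun_prop), ← integral_const_mul]
  simp only [mul_pow]

/-- Integrating by parts `t` times moves the `t` factors `x - d/dx` of `hermite t` onto `P`. -/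
lemma integral_aeval_mul_hermite (P : ℤ[X]) (t : ℕ) :
    ∫ x, aeval x (P * hermite t) ∂gaussianReal 0 1 =
      ∫ x, aeval x (derivative^[t] P) ∂gaussianReal 0 1 := by
  induction t generalizing P with
  | zero => simp
  | succ t ih =>
    have hint (Q : ℤ[X]) : Integrable (fun x : ℝ ↦ aeval x Q) (gaussianReal 0 1) :=
      integrable_aeval_gaussianReal 0 1 Q
    have hstein : ∫ x, aeval x (X * (P * hermite t)) ∂gaussianReal 0 1 =
        ∫ x, aeval x (derivative (P * hermite t)) ∂gaussianReal 0 1 := by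
      have hX := hint (X * (P * hermite t))
      simp only [map_mul _ X, aeval_X] at hX ⊢
      have h := integral_sub_mul_gaussianReal (v := 1)
        (fun x ↦ (P * hermite t).hasDerivAt_aeval x) (hint _) (hint _) (by simpa only [sub_zero])
      simpa only [sub_zero, NNReal.coe_one, one_mul] using h
    calc ∫ x, aeval x (P * hermite (t + 1)) ∂gaussianReal 0 1
      _ = ∫ x, (aeval x (X * (P * hermite t)) - aeval x (P * derivative (hermite t)))
            ∂gaussianReal 0 1 := by
          congr! 2 with x
          rw [hermite_succ, ← map_sub]
          ring_nf
      _ = ∫ x, (aeval x (derivative (P * hermite t)) - aeval x (P * derivative (hermite t)))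
            ∂gaussianReal 0 1 := by
          rw [integral_sub (hint _) (hint _), hstein, integral_sub (hint _) (hint _)]
      _ = ∫ x, aeval x (derivative P * hermite t) ∂gaussianReal 0 1 := by
          simp only [← map_sub, derivative_mul, add_sub_cancel_right]
      _ = ∫ x, aeval x (derivative^[t + 1] P) ∂gaussianReal 0 1 := by
          rw [ih, Function.iterate_succ_apply]

lemma integrable_pow_mul_hermN (a t : ℕ) :
    Integrable (fun x ↦ x ^ a * hermN t x) (gaussianReal 0 1) := by
  have h : Integrable (fun x ↦ aeval x (X ^ a * hermite t)) (gaussianReal 0 1) :=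
    integrable_aeval_gaussianReal 0 1 _
  simpa [hermN, mul_div_assoc] using h.div_const √(t.factorial : ℝ)

lemma integral_pow_mul_hermN (a t : ℕ) :
    ∫ x, x ^ a * hermN t x ∂gaussianReal 0 1 =
      a.descFactorial t * (∫ x, x ^ (a - t) ∂gaussianReal 0 1) / √(t.factorial : ℝ) := by
  have h := integral_aeval_mul_hermite (X ^ a) t
  rw [iterate_derivative_X_pow_eq_natCast_mul] at h
  simp only [map_mul, map_pow, aeval_X, map_natCast, integral_const_mul] at h
  rw [← h, ← integral_div]
  simp only [hermN, mul_div_assoc]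

lemma integral_pow_mul_hermN_of_lt {a t : ℕ} (h : a < t) :
    ∫ x, x ^ a * hermN t x ∂gaussianReal 0 1 = 0 := by
  simp [integral_pow_mul_hermN, Nat.descFactorial_of_lt h]

lemma integral_pow_self_mul_hermN_ne_zero (t : ℕ) :
    ∫ x, x ^ t * hermN t x ∂gaussianReal 0 1 ≠ 0 := by
  simp [integral_pow_mul_hermN, Nat.descFactorial_self, Nat.factorial_ne_zero]

end Gaussian

section TotalDegree

variable {ι R : Type*} [Fintype ι] [CommSemiring R] {G : MvPolynomial ι R}

lemma sum_le_totalDegree {m : ι →₀ ℕ} (hm : m ∈ G.support) : ∑ i, m i ≤ G.totalDegree := by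
  have h := MvPolynomial.le_totalDegree hm
  rwa [Finsupp.sum_fintype _ _ fun _ ↦ rfl] at h

lemma exists_mem_support_sum_eq_totalDegree (hG : G ≠ 0) :
    ∃ m ∈ G.support, ∑ i, m i = G.totalDegree := by
  obtain ⟨m, hm, h⟩ := Finset.exists_mem_eq_sup G.support (MvPolynomial.support_nonempty.2 hG)
    fun m ↦ m.sum fun _ e ↦ e
  exact ⟨m, hm, by rw [MvPolynomial.totalDegree, h, Finsupp.sum_fintype _ _ fun _ ↦ rfl]⟩

end TotalDegree

section Hermite

open Matrix

variable {d p : ℕ}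

/-- The Hermite coefficient `⟨x ^ α, χ_T⟩` in `L²(γ_d)` of the monomial with exponents `α`. -/
noncomputable def hermiteMoment (α T : Fin d → ℕ) : ℝ :=
  ∫ x, (∏ i, x i ^ α i) * chiH T x ∂gaussD d

lemma integrable_prod_pow_mul_chiH (α T : Fin d → ℕ) :
    Integrable (fun x ↦ (∏ i, x i ^ α i) * chiH T x) (gaussD d) := by
  simp only [chiH, ← Finset.prod_mul_distrib]
  exact .fintype_prod (f := fun i y ↦ y ^ α i * hermN (T i) y)
    fun i ↦ integrable_pow_mul_hermN (α i) (T i)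

lemma hermiteMoment_eq_prod (α T : Fin d → ℕ) :
    hermiteMoment α T = ∏ i, ∫ y, y ^ α i * hermN (T i) y ∂gaussianReal 0 1 := by
  simp only [hermiteMoment, gaussD, chiH, ← Finset.prod_mul_distrib]
  exact integral_fintype_prod_eq_prod (fun i y ↦ y ^ α i * hermN (T i) y)

lemma hermiteMoment_self_ne_zero (T : Fin d → ℕ) : hermiteMoment T T ≠ 0 := by
  rw [hermiteMoment_eq_prod, Finset.prod_ne_zero_iff]
  exact fun i _ ↦ integral_pow_self_mul_hermN_ne_zero (T i)

lemma hermiteMoment_eq_zero {α T : Fin d → ℕ} (hle : ∑ i, α i ≤ ∑ i, T i) (hne : α ≠ T) :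
    hermiteMoment α T = 0 := by
  obtain ⟨i, hi⟩ : ∃ i, α i < T i := by
    by_contra! hTα
    have heq := (Finset.sum_eq_sum_iff_of_le fun i _ ↦ hTα i).1
      (hle.antisymm' (Finset.sum_le_sum fun i _ ↦ hTα i))
    exact hne (funext fun i ↦ (heq i (Finset.mem_univ i)).symm)
  rw [hermiteMoment_eq_prod]
  exact Finset.prod_eq_zero (Finset.mem_univ i) (integral_pow_mul_hermN_of_lt hi)

lemma hermVec_eq_sum (G : MvPolynomial (Fin d) ℝ) (T : MIdx d p) :
    hermVec d p G T = ∑ m ∈ G.support, G.coeff m * hermiteMoment m T.toFun := by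
  simp only [hermVec, MvPolynomial.eval_eq', Finset.sum_mul, mul_assoc]
  rw [integral_finsetSum _ fun m _ ↦ (integrable_prod_pow_mul_chiH _ _).const_mul _]
  simp only [integral_const_mul, hermiteMoment]

lemma MIdx.toFun_injective : Function.Injective (MIdx.toFun (d := d) (p := p)) :=
  fun _ _ h ↦ Subtype.ext (funext fun i ↦ Fin.ext (congrFun h i))

lemma MIdx.sum_toFun_le (T : MIdx d p) : ∑ i, T.toFun i ≤ p := T.2

lemma MIdx.exists_toFun_eq {α : Fin d → ℕ} (hα : ∑ i, α i ≤ p) : ∃ T : MIdx d p, T.toFun = α := by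
  have hlt (i : Fin d) : α i < p + 1 :=
    Nat.lt_succ_of_le
      ((Finset.single_le_sum (fun _ _ ↦ Nat.zero_le _) (Finset.mem_univ i)).trans hα)
  exact ⟨⟨fun i ↦ ⟨α i, hlt i⟩, hα⟩, rfl⟩

lemma exists_hermVec_ne_zero {G : MvPolynomial (Fin d) ℝ} (hG : G ≠ 0) (hGp : G.totalDegree ≤ p) :
    ∃ T : MIdx d p, ∑ i, T.toFun i = G.totalDegree ∧ hermVec d p G T ≠ 0 := by
  obtain ⟨m, hm, hms⟩ := exists_mem_support_sum_eq_totalDegree hG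
  obtain ⟨T, hT⟩ := MIdx.exists_toFun_eq (hms.trans_le hGp)
  refine ⟨T, by rw [hT, hms], ?_⟩
  rw [hermVec_eq_sum, hT, Finset.sum_eq_single_of_mem m hm fun m' hm' hne ↦ ?_]
  · exact mul_ne_zero (MvPolynomial.mem_support_iff.1 hm) (hermiteMoment_self_ne_zero _)
  · rw [hermiteMoment_eq_zero ((sum_le_totalDegree hm').trans_eq hms.symm)
      (DFunLike.coe_injective.ne hne), mul_zero]

lemma exists_hermiteMoment_dotProduct_ne_zero {v : MIdx d p → ℝ} (hv : v ≠ 0) :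
    ∃ T : MIdx d p, (fun T' : MIdx d p ↦ hermiteMoment T.toFun T'.toFun) ⬝ᵥ v ≠ 0 := by
  obtain ⟨T₀, hT₀⟩ := Function.ne_iff.1 hv
  obtain ⟨T, hT, hmin⟩ := Finset.exists_min_image
    (Finset.univ.filter fun T : MIdx d p ↦ v T ≠ 0) (fun T ↦ ∑ i, T.toFun i)
    ⟨T₀, by simpa using hT₀⟩
  rw [Finset.mem_filter_univ] at hT
  refine ⟨T, ?_⟩
  rw [dotProduct, Finset.sum_eq_single_of_mem T (Finset.mem_univ T) fun T' _ hne ↦ ?_]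
  · exact mul_ne_zero (hermiteMoment_self_ne_zero _) hT
  rcases eq_or_ne (v T') 0 with h0 | h0
  · rw [h0, mul_zero]
  · rw [hermiteMoment_eq_zero (hmin T' (Finset.mem_filter_univ _ |>.2 h0))
      (MIdx.toFun_injective.ne hne.symm), zero_mul]

end Hermite

section PosDef

open Matrix

variable {n κ : Type*} [Fintype n] [Fintype κ]

lemma dotProduct_mulVec_le_of_abs_le (M : Matrix κ κ ℝ) {u a : κ → ℝ} (h : ∀ i, |u i| ≤ a i) :
    u ⬝ᵥ (M *ᵥ u) ≤ a ⬝ᵥ (M.map abs *ᵥ a) := by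
  simp only [dotProduct, mulVec, Finset.mul_sum, map_apply]
  refine Finset.sum_le_sum fun i _ ↦ Finset.sum_le_sum fun j _ ↦ ?_
  calc u i * (M i j * u j) ≤ |u i| * (|M i j| * |u j|) := by
        rw [← abs_mul, ← abs_mul]; exact le_abs_self _
    _ ≤ a i * (|M i j| * a j) := by
        gcongr
        exacts [(abs_nonneg _).trans (h i), h i, h j]

lemma dotProduct_transpose_mul_mul_mulVec (M : Matrix κ κ ℝ) (B : Matrix κ n ℝ) (v : n → ℝ) :
    v ⬝ᵥ ((Bᵀ * M * B) *ᵥ v) = (B *ᵥ v) ⬝ᵥ (M *ᵥ (B *ᵥ v)) := by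
  rw [← mulVec_mulVec, ← mulVec_mulVec, dotProduct_mulVec, vecMul_transpose]

lemma posDef_transpose_mul_mul {M : Matrix κ κ ℝ} (hM : M.PosDef) {B : Matrix κ n ℝ}
    (hB : Function.Injective B.mulVec) : (Bᵀ * M * B).PosDef := by
  simpa only [conjTranspose_eq_transpose_of_trivial] using hM.conjTranspose_mul_mul_same hB

lemma mulVec_inv_mulVec_of_posDef [DecidableEq κ] {M : Matrix κ κ ℝ} (hM : M.PosDef)
    (g : κ → ℝ) : M *ᵥ (M⁻¹ *ᵥ g) = g := by
  rw [mulVec_mulVec, mul_nonsing_inv _ ((isUnit_iff_isUnit_det M).1 hM.isUnit), one_mulVec]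

lemma sq_dotProduct_le_of_posDef [DecidableEq κ] {M : Matrix κ κ ℝ} (hM : M.PosDef)
    (g v : κ → ℝ) : (g ⬝ᵥ v) ^ 2 ≤ (g ⬝ᵥ (M⁻¹ *ᵥ g)) * (v ⬝ᵥ (M *ᵥ v)) := by
  have hcross : (M⁻¹ *ᵥ g) ⬝ᵥ (M *ᵥ v) = g ⬝ᵥ v := by
    rw [dotProduct_mulVec, ← mulVec_transpose, ← conjTranspose_eq_transpose_of_trivial,
      hM.isHermitian.eq, mulVec_inv_mulVec_of_posDef hM]
  have hnonneg (t : ℝ) :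
      0 ≤ (v ⬝ᵥ (M *ᵥ v)) * (t * t) + (2 * (g ⬝ᵥ v)) * t + g ⬝ᵥ (M⁻¹ *ᵥ g) := by
    have h := hM.posSemidef.dotProduct_mulVec_nonneg (t • v + M⁻¹ *ᵥ g)
    simp only [star_trivial, mulVec_add, mulVec_smul, mulVec_inv_mulVec_of_posDef hM,
      add_dotProduct, dotProduct_add, smul_dotProduct, dotProduct_smul, smul_eq_mul, hcross,
      dotProduct_comm v g, dotProduct_comm (M⁻¹ *ᵥ g) g] at h
    linarith
  have hdiscrim := discrim_le_zero hnonneg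
  rw [discrim] at hdiscrim
  linarith

lemma dotProduct_inv_mulVec_nonneg [DecidableEq κ] {M : Matrix κ κ ℝ} (hM : M.PosDef)
    (g : κ → ℝ) : 0 ≤ g ⬝ᵥ (M⁻¹ *ᵥ g) := by
  simpa only [star_trivial] using hM.inv.posSemidef.dotProduct_mulVec_nonneg g

lemma vecMul_dotProduct_inv_mulVec_le [DecidableEq κ] [DecidableEq n] {M : Matrix κ κ ℝ}
    (hM : M.PosDef) {B : Matrix κ n ℝ} (hB : Function.Injective B.mulVec) (c : κ → ℝ) :
    (c ᵥ* B) ⬝ᵥ ((Bᵀ * M * B)⁻¹ *ᵥ (c ᵥ* B)) ≤ c ⬝ᵥ (M⁻¹ *ᵥ c) := by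
  have hΦ := posDef_transpose_mul_mul hM hB
  set v := (Bᵀ * M * B)⁻¹ *ᵥ (c ᵥ* B) with hv
  have hsq : ((c ᵥ* B) ⬝ᵥ v) ^ 2 ≤ (c ⬝ᵥ (M⁻¹ *ᵥ c)) * ((c ᵥ* B) ⬝ᵥ v) := by
    have h := sq_dotProduct_le_of_posDef hM c (B *ᵥ v)
    rwa [dotProduct_mulVec, ← dotProduct_transpose_mul_mul_mulVec, hv,
      mulVec_inv_mulVec_of_posDef hΦ, ← hv, dotProduct_comm v] at h
  rcases (dotProduct_inv_mulVec_nonneg hΦ (c ᵥ* B)).eq_or_lt with h0 | hpos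
  · exact h0.symm.trans_le (dotProduct_inv_mulVec_nonneg hM c)
  · exact le_of_mul_le_mul_right (by rwa [← pow_two]) hpos

end PosDef

section GradedScaling

open Matrix

variable {n κ : Type*} [Fintype κ] [DecidableEq κ] {A : Matrix κ n ℝ} {e : κ → ℕ} {s : ℕ}

/-- The matrix `A` with its row of index `i` scaled by `r ^ e i`, for a grading `e` of the rows. -/
def gradedScale (e : κ → ℕ) (r : ℝ) (A : Matrix κ n ℝ) : Matrix κ n ℝ :=
  diagonal (fun i ↦ r ^ e i) * A

lemma vecMul_gradedScale (r : ℝ) {c : κ → ℝ} (hc : ∀ i, e i ≠ s → c i = 0) :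
    c ᵥ* gradedScale e r A = r ^ s • (c ᵥ* A) := by
  rw [gradedScale, ← vecMul_vecMul, ← smul_vecMul]
  congr 1 with i
  rw [vecMul_diagonal, Pi.smul_apply, smul_eq_mul, mul_comm]
  rcases eq_or_ne (e i) s with rfl | hi
  · rfl
  · simp [hc i hi]

variable [Fintype n]

lemma gradedScale_mulVec_apply (r : ℝ) (v : n → ℝ) (i : κ) :
    (gradedScale e r A *ᵥ v) i = r ^ e i * (A *ᵥ v) i := by
  rw [gradedScale, ← mulVec_mulVec, mulVec_diagonal]

lemma injective_gradedScale_mulVec (hA : Function.Injective A.mulVec) {r : ℝ} (hr : r ≠ 0) :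
    Function.Injective (gradedScale e r A).mulVec := by
  refine fun v w hvw ↦ hA (funext fun i ↦ ?_)
  have h := congrFun hvw i
  rw [gradedScale_mulVec_apply, gradedScale_mulVec_apply] at h
  exact mul_left_cancel₀ (pow_ne_zero _ hr) h

lemma dotProduct_gradedScale_mulVec_le (M : Matrix κ κ ℝ) {v : n → ℝ}
    (hv : ∀ i, e i < s → (A *ᵥ v) i = 0) {r : ℝ} (hr : |r| ≤ 1) :
    v ⬝ᵥ (((gradedScale e r A)ᵀ * M * gradedScale e r A) *ᵥ v) ≤
      (|A *ᵥ v| ⬝ᵥ (M.map abs *ᵥ |A *ᵥ v|)) * (r ^ 2) ^ s := by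
  have hbound (i : κ) : |(gradedScale e r A *ᵥ v) i| ≤ (|r| ^ s • |A *ᵥ v|) i := by
    rw [gradedScale_mulVec_apply, abs_mul, abs_pow]
    rcases lt_or_ge (e i) s with hi | hi
    · simp [hv i hi]
    · exact mul_le_mul_of_nonneg_right (pow_le_pow_of_le_one (abs_nonneg r) hr hi) (abs_nonneg _)
  rw [dotProduct_transpose_mul_mul_mulVec]
  refine (dotProduct_mulVec_le_of_abs_le M hbound).trans_eq ?_
  rw [mulVec_smul, smul_dotProduct, dotProduct_smul, smul_eq_mul, smul_eq_mul, ← sq_abs r]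
  ring

variable [DecidableEq n] {M : Matrix κ κ ℝ}

lemma dotProduct_inv_gradedScale_le (hM : M.PosDef) (hA : Function.Injective A.mulVec)
    {c : κ → ℝ} (hc : ∀ i, e i ≠ s → c i = 0) {r : ℝ} (hr : r ≠ 0) :
    (c ᵥ* A) ⬝ᵥ (((gradedScale e r A)ᵀ * M * gradedScale e r A)⁻¹ *ᵥ (c ᵥ* A)) ≤
      c ⬝ᵥ (M⁻¹ *ᵥ c) * ((r ^ 2) ^ s)⁻¹ := by
  have h := vecMul_dotProduct_inv_mulVec_le hM (injective_gradedScale_mulVec (e := e) hA hr) c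
  rw [vecMul_gradedScale r hc, mulVec_smul, smul_dotProduct, dotProduct_smul, smul_eq_mul,
    smul_eq_mul, ← mul_assoc, ← pow_two, pow_right_comm] at h
  rwa [← div_eq_mul_inv, le_div_iff₀' (by positivity)]

/-- The exponent `s` is read off from both sides: testing against `v` bounds the form from below,
and representing `g` by row coordinates of degree exactly `s` bounds it from above. -/
theorem exists_bounds_dotProduct_inv_gradedScale (hM : M.PosDef)
    (hA : Function.Injective A.mulVec) {c : κ → ℝ} (hc : ∀ i, e i ≠ s → c i = 0)
    {g v : n → ℝ} (hg : c ᵥ* A = g) (hv : ∀ i, e i < s → (A *ᵥ v) i = 0) (hgv : g ⬝ᵥ v ≠ 0)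
    {Φ : ℝ → Matrix n n ℝ}
    (hΦ : ∀ ε, 0 < ε → Φ ε = (gradedScale e √ε A)ᵀ * M * gradedScale e √ε A) :
    ∃ c₁ > 0, ∃ c₂ > 0, ∀ ε, 0 < ε → ε ≤ 1 → IsUnit (Φ ε).det ∧
      c₁ * (ε ^ s)⁻¹ ≤ g ⬝ᵥ ((Φ ε)⁻¹ *ᵥ g) ∧ g ⬝ᵥ ((Φ ε)⁻¹ *ᵥ g) ≤ c₂ * (ε ^ s)⁻¹ := by
  have hΦpos {ε : ℝ} (hε : 0 < ε) : (Φ ε).PosDef := by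
    rw [hΦ ε hε]
    exact posDef_transpose_mul_mul hM (injective_gradedScale_mulVec hA (Real.sqrt_pos.2 hε).ne')
  set L := |A *ᵥ v| ⬝ᵥ (M.map abs *ᵥ |A *ᵥ v|)
  have hvΦ {ε : ℝ} (hε : 0 < ε) (hε1 : ε ≤ 1) : v ⬝ᵥ (Φ ε *ᵥ v) ≤ L * ε ^ s := by
    have hr : |√ε| ≤ 1 := by rwa [abs_of_nonneg (Real.sqrt_nonneg ε), Real.sqrt_le_one]
    simpa only [hΦ ε hε, Real.sq_sqrt hε.le] using dotProduct_gradedScale_mulVec_le M hv hr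
  have hL : 0 < L := by
    have hv0 : v ≠ 0 := by rintro rfl; simp at hgv
    have h := (hΦpos one_pos).dotProduct_mulVec_pos hv0
    simpa using h.trans_le (hvΦ one_pos le_rfl)
  have hc0 : c ≠ 0 := by rintro rfl; simp [← hg] at hgv
  have hcM : 0 < c ⬝ᵥ (M⁻¹ *ᵥ c) := by simpa using hM.inv.dotProduct_mulVec_pos hc0
  refine ⟨(g ⬝ᵥ v) ^ 2 / L, by positivity, c ⬝ᵥ (M⁻¹ *ᵥ c), hcM, fun ε hε hε1 ↦
    ⟨(isUnit_iff_isUnit_det _).1 (hΦpos hε).isUnit, ?_, ?_⟩⟩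
  · rw [← div_eq_mul_inv, div_div, div_le_iff₀ (by positivity)]
    exact (sq_dotProduct_le_of_posDef (hΦpos hε) g v).trans
      (mul_le_mul_of_nonneg_left (hvΦ hε hε1) (dotProduct_inv_mulVec_nonneg (hΦpos hε) g))
  · have h := dotProduct_inv_gradedScale_le hM hA hc (Real.sqrt_pos.2 hε).ne'
    rwa [Real.sq_sqrt hε.le, hg, ← hΦ ε hε] at h

end GradedScaling

section GramMatrix

open Matrix

variable {X κ n : Type*} [MeasurableSpace X] {μ : Measure X} {f : κ → X → ℝ}

/-- The Gram matrix `⟨f i, f j⟩_{L²(μ)}` of a family of plain functions, not bundled in `Lp`, whose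
products are meant to be integrable (a product that is not contributes the entry `0`). -/
noncomputable def gramMatrix (μ : Measure X) (f : κ → X → ℝ) : Matrix κ κ ℝ :=
  of fun i j ↦ ∫ x, f i x * f j x ∂μ

lemma sum_mul_sum_eq_sum_sum [Fintype κ] (a b u w : κ → ℝ) :
    (∑ i, a i * u i) * ∑ j, b j * w j = ∑ i, ∑ j, a i * b j * (u i * w j) := by
  rw [Finset.sum_mul_sum]
  exact Finset.sum_congr rfl fun i _ ↦ Finset.sum_congr rfl fun j _ ↦ mul_mul_mul_comm ..

lemma integrable_sum_mul_sum [Fintype κ] (hf : ∀ i j, Integrable (fun x ↦ f i x * f j x) μ)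
    (a b : κ → ℝ) :
    Integrable (fun x ↦ (∑ i, a i * f i x) * ∑ j, b j * f j x) μ := by
  simp only [sum_mul_sum_eq_sum_sum]
  exact integrable_finsetSum _ fun i _ ↦ integrable_finsetSum _ fun j _ ↦ (hf i j).const_mul _

lemma dotProduct_gramMatrix_mulVec [Fintype κ]
    (hf : ∀ i j, Integrable (fun x ↦ f i x * f j x) μ) (a b : κ → ℝ) :
    a ⬝ᵥ (gramMatrix μ f *ᵥ b) = ∫ x, (∑ i, a i * f i x) * ∑ j, b j * f j x ∂μ := by
  simp only [sum_mul_sum_eq_sum_sum]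
  rw [integral_finsetSum _ fun i _ ↦ integrable_finsetSum _ fun j _ ↦ (hf i j).const_mul _]
  simp only [dotProduct, mulVec, Finset.mul_sum]
  refine Finset.sum_congr rfl fun i _ ↦ ?_
  rw [integral_finsetSum _ fun j _ ↦ (hf i j).const_mul _]
  refine Finset.sum_congr rfl fun j _ ↦ ?_
  rw [integral_const_mul, gramMatrix, of_apply]
  ring

lemma gramMatrix_sum_mul [Fintype κ] (hf : ∀ i j, Integrable (fun x ↦ f i x * f j x) μ)
    (A : Matrix κ n ℝ) :
    gramMatrix μ (fun T x ↦ ∑ i, A i T * f i x) = Aᵀ * gramMatrix μ f * A := by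
  ext T T'
  exact (dotProduct_gramMatrix_mulVec hf (A.col T) (A.col T')).symm.trans
    (by rw [Matrix.mul_assoc]; rfl)

lemma posDef_gramMatrix [Finite κ] [TopologicalSpace X] [μ.IsOpenPosMeasure]
    (hc : ∀ i, Continuous (f i)) (hf : ∀ i j, Integrable (fun x ↦ f i x * f j x) μ)
    (hli : LinearIndependent ℝ f) :
    (gramMatrix μ f).PosDef := by
  cases nonempty_fintype κ
  refine .of_dotProduct_mulVec_pos ?_ fun a ha ↦ ?_
  · ext i j
    simp only [conjTranspose_apply, star_trivial, gramMatrix, of_apply, mul_comm]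
  obtain ⟨x, hx⟩ : ∃ x, ∑ i, a i * f i x ≠ 0 := by
    by_contra! h
    refine ha (funext fun i ↦ Fintype.linearIndependent_iff.1 hli a (funext fun x ↦ ?_) i)
    simpa using h x
  rw [star_trivial, dotProduct_gramMatrix_mulVec hf]
  exact integral_pos_of_integrable_nonneg_nonzero (x := x) (by fun_prop)
    (integrable_sum_mul_sum hf a a) (fun x ↦ mul_self_nonneg _) (mul_self_ne_zero.2 hx)

end GramMatrix

section Monomial

variable {ι : Type*} [Fintype ι]

/-- The monomial `z ↦ z ^ β` as a function. -/
def monomialFun {R : Type*} [CommMonoid R] (β : ι → ℕ) (z : ι → R) : R :=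
  ∏ i, z i ^ β i

lemma monomialFun_mul_monomialFun {R : Type*} [CommMonoid R] (β β' : ι → ℕ) (z : ι → R) :
    monomialFun β z * monomialFun β' z = monomialFun (β + β') z := by
  simp only [monomialFun, ← Finset.prod_mul_distrib, Pi.add_apply, pow_add]

lemma linearIndependent_monomialFun (R : Type*) [CommRing R] [IsDomain R] [Infinite R] :
    LinearIndependent R (monomialFun : (ι → ℕ) → (ι → R) → R) := by
  have hker : (MvPolynomial.evalₗ R ι).ker = ⊥ :=
    LinearMap.ker_eq_bot.2 fun P Q h ↦ MvPolynomial.funext (congrFun h)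
  have hli := ((MvPolynomial.basisMonomials ι R).linearIndependent.map' _ hker).comp
    Finsupp.equivFunOnFinite.symm Finsupp.equivFunOnFinite.symm.injective
  have heq : (monomialFun : (ι → ℕ) → (ι → R) → R) =
      (MvPolynomial.evalₗ R ι ∘ MvPolynomial.basisMonomials ι R) ∘
        Finsupp.equivFunOnFinite.symm := by
    ext β z
    simp [monomialFun, MvPolynomial.eval_monomial, Finsupp.prod_fintype]
  rwa [heq]

lemma integrable_monomialFun (v : NNReal) (β : ι → ℕ) :
    Integrable (monomialFun β) (Measure.pi fun _ : ι ↦ gaussianReal 0 v) :=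
  .fintype_prod (f := fun i x ↦ x ^ β i) fun i ↦ integrable_pow_gaussianReal 0 v (β i)

lemma isOpenPosMeasure_gaussianReal (μ : ℝ) {v : NNReal} (hv : v ≠ 0) :
    (gaussianReal μ v).IsOpenPosMeasure :=
  (gaussianReal_absolutelyContinuous' μ hv).isOpenPosMeasure

lemma posDef_gramMatrix_monomialFun (S : Finset (ι → ℕ)) {v : NNReal} (hv : v ≠ 0) :
    (gramMatrix (Measure.pi fun _ ↦ gaussianReal 0 v) fun β : S ↦ monomialFun β.1).PosDef := by
  have := isOpenPosMeasure_gaussianReal 0 hv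
  refine posDef_gramMatrix (fun β ↦ by unfold monomialFun; fun_prop) (fun β β' ↦ ?_)
    ((linearIndependent_monomialFun ℝ).comp _ Subtype.val_injective)
  simpa only [monomialFun_mul_monomialFun] using integrable_monomialFun v _

lemma integral_monomialFun (v : NNReal) (β : ι → ℕ) :
    ∫ z, monomialFun β z ∂(Measure.pi fun _ ↦ gaussianReal 0 v) =
      √v ^ (∑ i, β i) * ∫ z, monomialFun β z ∂(Measure.pi fun _ ↦ gaussianReal 0 1) := by
  have hprod (u : NNReal) : ∫ z, monomialFun β z ∂(Measure.pi fun _ ↦ gaussianReal 0 u) =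
      ∏ i, ∫ x, x ^ β i ∂gaussianReal 0 u :=
    integral_fintype_prod_eq_prod fun i x ↦ x ^ β i
  simp only [hprod, integral_pow_gaussianReal v, Finset.prod_mul_distrib,
    Finset.prod_pow_eq_pow_sum]

end Monomial

section Expansion

open Polynomial

variable {ι : Type*} [Fintype ι]

variable (ι) in
/-- The exponents of the monomials of total degree at most `p` in the variables `ι`. -/
def exponentsLE [DecidableEq ι] (p : ℕ) : Finset (ι → ℕ) :=
  (Finset.range (p + 1)).biUnion (Finset.piAntidiag Finset.univ)

lemma mem_exponentsLE [DecidableEq ι] {p : ℕ} {β : ι → ℕ} : β ∈ exponentsLE ι p ↔ ∑ i, β i ≤ p := by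
  simp [exponentsLE]

/-- The coefficient of `z ^ β` in the expansion of `P (∑ i, z i)`. -/
def sumEvalCoeff {R : Type*} [Semiring R] (P : R[X]) (β : ι → ℕ) : R :=
  P.coeff (∑ i, β i) * Nat.multinomial Finset.univ β

lemma sumEvalCoeff_ne_zero {R : Type*} [Semiring R] [NoZeroDivisors R] [CharZero R] {P : R[X]}
    {β : ι → ℕ} (h : P.coeff (∑ i, β i) ≠ 0) : sumEvalCoeff P β ≠ 0 :=
  mul_ne_zero h (Nat.cast_ne_zero.2 (Nat.multinomial_pos _ _).ne')

lemma eval_sum_eq_sum_exponentsLE [DecidableEq ι] {R : Type*} [CommSemiring R] (P : R[X])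
    (z : ι → R) :
    P.eval (∑ i, z i) = ∑ β ∈ exponentsLE ι P.natDegree, sumEvalCoeff P β * monomialFun β z := by
  have hdisj : (Finset.range (P.natDegree + 1) : Set ℕ).PairwiseDisjoint
      (Finset.piAntidiag (Finset.univ : Finset ι)) := by
    refine fun a _ b _ hab ↦ Finset.disjoint_left.2 fun β ha hb ↦ hab ?_
    exact (Finset.mem_piAntidiag.1 ha).1.symm.trans (Finset.mem_piAntidiag.1 hb).1
  rw [eval_eq_sum_range, exponentsLE, Finset.sum_biUnion hdisj]
  refine Finset.sum_congr rfl fun k _ ↦ ?_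
  rw [Finset.sum_pow_eq_sum_piAntidiag, Finset.mul_sum]
  refine Finset.sum_congr rfl fun β hβ ↦ ?_
  rw [sumEvalCoeff, (Finset.mem_piAntidiag.1 hβ).1, mul_assoc, monomialFun]

end Expansion

section Feature

open Matrix Polynomial

variable {d p : ℕ}

/-- The weights and the bias of a feature as one point, the bias being the coordinate `none`. -/
def featurePoint (wb : (Fin d → ℝ) × ℝ) : Option (Fin d) → ℝ :=
  fun o ↦ o.elim wb.2 wb.1

lemma measurableEmbedding_featurePoint : MeasurableEmbedding (featurePoint (d := d)) := by
  convert! (MeasurableEquiv.piOptionEquivProd fun _ : Option (Fin d) ↦ ℝ).symm.measurableEmbedding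
    using 1
  ext wb (_ | i) <;> rfl

lemma map_featurePoint_featMeas (v : NNReal) :
    (featMeas d v).map featurePoint = Measure.pi fun _ ↦ gaussianReal 0 v := by
  rw [← Measure.pi_map_piOptionEquivProd fun _ : Option (Fin d) ↦ gaussianReal 0 v]
  congr 1
  ext wb (_ | i) <;> rfl

lemma integrable_monomialFun_featurePoint (v : NNReal) (β : Option (Fin d) → ℕ) :
    Integrable (fun wb ↦ monomialFun β (featurePoint wb)) (featMeas d v) := by
  have h := integrable_monomialFun v β
  rwa [← map_featurePoint_featMeas, measurableEmbedding_featurePoint.integrable_map_iff] at h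

lemma integral_monomialFun_featurePoint (v : NNReal) (β : Option (Fin d) → ℕ) :
    ∫ wb, monomialFun β (featurePoint wb) ∂featMeas d v =
      √v ^ (∑ o, β o) * ∫ z, monomialFun β z ∂(Measure.pi fun _ ↦ gaussianReal 0 1) := by
  rw [← integral_monomialFun, ← map_featurePoint_featMeas,
    measurableEmbedding_featurePoint.integral_map]

lemma gramMatrix_monomialFun_featurePoint (v : NNReal)
    (S : Finset (Option (Fin d) → ℕ)) :
    gramMatrix (featMeas d v) (fun (β : S) wb ↦ monomialFun β.1 (featurePoint wb)) =
      diagonal (fun β ↦ √v ^ ∑ o, β.1 o) *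
        gramMatrix (Measure.pi fun _ ↦ gaussianReal 0 1) (fun β : S ↦ monomialFun β.1) *
          diagonal (fun β ↦ √v ^ ∑ o, β.1 o) := by
  ext β β'
  rw [mul_diagonal, diagonal_mul]
  simp only [gramMatrix, of_apply, monomialFun_mul_monomialFun,
    integral_monomialFun_featurePoint, Pi.add_apply, Finset.sum_add_distrib, pow_add]
  ring

lemma phiHat_eval_eq_sum (P : ℝ[X]) (wb : (Fin d → ℝ) × ℝ) (T : Fin d → ℕ) :
    phiHat d (fun y ↦ P.eval y) wb.1 wb.2 T =
      ∑ β ∈ exponentsLE (Option (Fin d)) P.natDegree,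
        sumEvalCoeff P β * hermiteMoment (fun i ↦ β (some i)) T *
          monomialFun β (featurePoint wb) := by
  have hexpand (x : Fin d → ℝ) : P.eval (∑ i, wb.1 i * x i + wb.2) * chiH T x =
      ∑ β ∈ exponentsLE (Option (Fin d)) P.natDegree,
        sumEvalCoeff P β * monomialFun β (featurePoint wb) *
          ((∏ i, x i ^ β (some i)) * chiH T x) := by
    have h := eval_sum_eq_sum_exponentsLE P fun o : Option (Fin d) ↦
      o.elim wb.2 fun i ↦ wb.1 i * x i
    rw [Fintype.sum_option, Option.elim_none, add_comm] at h
    simp only [Option.elim_some] at h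
    rw [h, Finset.sum_mul]
    refine Finset.sum_congr rfl fun β _ ↦ ?_
    simp only [monomialFun, featurePoint, Fintype.prod_option, Option.elim_none, Option.elim_some,
      mul_pow, Finset.prod_mul_distrib]
    ring
  simp only [phiHat, hexpand]
  rw [integral_finsetSum _ fun β _ ↦ (integrable_prod_pow_mul_chiH _ _).const_mul _]
  refine Finset.sum_congr rfl fun β _ ↦ ?_
  rw [integral_const_mul, hermiteMoment]
  ring

/-- The total degree of an exponent, which grades the rows of `featureMatrix`. -/
def exponentDegree {ι : Type*} [Fintype ι] [DecidableEq ι] {p : ℕ} (β : exponentsLE ι p) : ℕ :=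
  ∑ i, β.1 i

variable (d p) in
/-- The column `T` holds the coefficients of `(w, b) ↦ φ̂_{w,b}(T)` on the monomials in `(w, b)`,
for the activation `P`. -/
noncomputable def featureMatrix (P : ℝ[X]) :
    Matrix (exponentsLE (Option (Fin d)) P.natDegree) (MIdx d p) ℝ :=
  of fun β T ↦ sumEvalCoeff P β.1 * hermiteMoment (fun i ↦ β.1 (some i)) T.toFun

lemma PhiMat_eval_eq (P : ℝ[X]) {ε : ℝ} (hε : 0 ≤ ε) :
    PhiMat d p (fun y ↦ P.eval y) ε =
      (gradedScale exponentDegree √ε (featureMatrix d p P))ᵀ *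
        gramMatrix (Measure.pi fun _ ↦ gaussianReal 0 1)
          (fun β : exponentsLE (Option (Fin d)) P.natDegree ↦ monomialFun β.1) *
        gradedScale exponentDegree √ε (featureMatrix d p P) := by
  have hgram : PhiMat d p (fun y ↦ P.eval y) ε = gramMatrix (featMeas d ε.toNNReal)
      fun T wb ↦ ∑ β, featureMatrix d p P β T * monomialFun β.1 (featurePoint wb) := by
    ext T T'
    simp only [PhiMat, gramMatrix, of_apply, phiHat_eval_eq_sum, featureMatrix]
    simp only [← Finset.sum_coe_sort (exponentsLE _ _)]
  have hint (β β' : exponentsLE (Option (Fin d)) P.natDegree) : Integrable (fun wb ↦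
      monomialFun β.1 (featurePoint wb) * monomialFun β'.1 (featurePoint wb))
      (featMeas d ε.toNNReal) := by
    simpa only [monomialFun_mul_monomialFun] using integrable_monomialFun_featurePoint _ _
  rw [hgram, gramMatrix_sum_mul hint, gramMatrix_monomialFun_featurePoint, Real.coe_toNNReal ε hε]
  simp only [gradedScale, exponentDegree, transpose_mul, diagonal_transpose, Matrix.mul_assoc]

lemma exists_vecMul_featureMatrix_eq_hermiteMoment {P : ℝ[X]} {k : ℕ} (hk : P.coeff k ≠ 0)
    {α : Fin d → ℕ} (hα : ∑ i, α i ≤ k) :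
    ∃ c : exponentsLE (Option (Fin d)) P.natDegree → ℝ, (∀ β, exponentDegree β ≠ k → c β = 0) ∧
      c ᵥ* featureMatrix d p P = fun T ↦ hermiteMoment α T.toFun := by
  -- the bias supplies the `k - ∑ i, α i` missing degrees
  let γ : Option (Fin d) → ℕ := fun o ↦ o.elim (k - ∑ i, α i) α
  have hγ : ∑ o, γ o = k := by
    rw [Fintype.sum_option]
    exact Nat.sub_add_cancel hα
  let β : exponentsLE (Option (Fin d)) P.natDegree :=
    ⟨γ, mem_exponentsLE.2 (hγ.trans_le (le_natDegree_of_ne_zero hk))⟩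
  have hcoeff : sumEvalCoeff P γ ≠ 0 := sumEvalCoeff_ne_zero (by rwa [hγ])
  refine ⟨Pi.single β (sumEvalCoeff P γ)⁻¹, fun β' hβ' ↦ Pi.single_eq_of_ne ?_ _, ?_⟩
  · rintro rfl
    exact hβ' hγ
  · ext T
    rw [single_vecMul, Pi.smul_apply, smul_eq_mul]
    exact inv_mul_cancel_left₀ hcoeff _

lemma exists_vecMul_featureMatrix_eq_hermVec {P : ℝ[X]} {G : MvPolynomial (Fin d) ℝ}
    (hG : P.coeff G.totalDegree ≠ 0) :
    ∃ c : exponentsLE (Option (Fin d)) P.natDegree → ℝ,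
      (∀ β, exponentDegree β ≠ G.totalDegree → c β = 0) ∧
      c ᵥ* featureMatrix d p P = hermVec d p G := by
  choose! c hc hcA using fun (m : Fin d →₀ ℕ) (hm : m ∈ G.support) ↦
    exists_vecMul_featureMatrix_eq_hermiteMoment (p := p) hG (sum_le_totalDegree hm)
  refine ⟨∑ m ∈ G.support, G.coeff m • c m, fun β hβ ↦ ?_, ?_⟩
  · simp only [Finset.sum_apply, Pi.smul_apply]
    exact Finset.sum_eq_zero fun m hm ↦ by rw [hc m hm β hβ, smul_zero]
  · ext T
    rw [hermVec_eq_sum, sum_vecMul, Finset.sum_apply]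
    refine Finset.sum_congr rfl fun m hm ↦ ?_
    rw [smul_vecMul, hcA m hm, Pi.smul_apply, smul_eq_mul]

lemma injective_featureMatrix_mulVec {P : ℝ[X]} (hP : P ≠ 0) (hp : p ≤ P.natDegree) :
    Function.Injective (featureMatrix d p P).mulVec := by
  refine (injective_iff_map_eq_zero (featureMatrix d p P).mulVecLin).2 fun v hv ↦ ?_
  by_contra hv0
  obtain ⟨T, hT⟩ := exists_hermiteMoment_dotProduct_ne_zero hv0
  obtain ⟨c, -, hc⟩ := exists_vecMul_featureMatrix_eq_hermiteMoment (p := p)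
    (leadingCoeff_ne_zero.2 hP) (T.sum_toFun_le.trans hp)
  rw [mulVecLin_apply] at hv
  rw [← hc, ← dotProduct_mulVec, hv, dotProduct_zero] at hT
  exact hT rfl

lemma featureMatrix_mulVec_single_eq_zero {P : ℝ[X]} {T : MIdx d p}
    {β : exponentsLE (Option (Fin d)) P.natDegree} (hβ : exponentDegree β < ∑ i, T.toFun i) :
    (featureMatrix d p P *ᵥ Pi.single T 1) β = 0 := by
  rw [exponentDegree, Fintype.sum_option] at hβ
  rw [mulVec_single_one, col_apply, featureMatrix, of_apply, hermiteMoment_eq_zero, mul_zero]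
  · omega
  · intro h
    simp only [← h] at hβ
    omega

lemma exists_polynomial_eval_eq_of_coeff_ne_zero {p : ℕ} {σ : ℝ → ℝ} {cf : Fin (p + 1) → ℝ}
    (hcf : ∀ k, cf k ≠ 0) (hσ : ∀ y, σ y = ∑ k : Fin (p + 1), cf k * y ^ (k : ℕ)) :
    ∃ P : ℝ[X], p ≤ P.natDegree ∧ (∀ k ≤ p, P.coeff k ≠ 0) ∧ σ = fun y ↦ P.eval y := by
  have hcoeff (k : ℕ) (hk : k ≤ p) : (ofFn (p + 1) cf).coeff k ≠ 0 := by
    rw [ofFn_coeff_eq_val_of_lt cf (Nat.lt_succ_of_le hk)]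
    exact hcf _
  refine ⟨ofFn (p + 1) cf, le_natDegree_of_ne_zero (hcoeff p le_rfl), hcoeff, funext fun y ↦ ?_⟩
  simp [hσ, ofFn_eq_sum_monomial, eval_finsetSum]

theorem stmt5_general {d p : ℕ} {P : ℝ[X]} (hp : p ≤ P.natDegree)
    {G : MvPolynomial (Fin d) ℝ} (hG : G ≠ 0) (hGp : G.totalDegree ≤ p)
    (hPG : P.coeff G.totalDegree ≠ 0) :
    ∃ c₁ > 0, ∃ c₂ > 0, ∀ ε, 0 < ε → ε ≤ 1 →
      IsUnit (PhiMat d p (fun y ↦ P.eval y) ε).det ∧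
        c₁ * (ε ^ G.totalDegree)⁻¹ ≤
          hermVec d p G ⬝ᵥ ((PhiMat d p (fun y ↦ P.eval y) ε)⁻¹ *ᵥ hermVec d p G) ∧
        hermVec d p G ⬝ᵥ ((PhiMat d p (fun y ↦ P.eval y) ε)⁻¹ *ᵥ hermVec d p G) ≤
          c₂ * (ε ^ G.totalDegree)⁻¹ := by
  have hP : P ≠ 0 := by rintro rfl; simp at hPG
  obtain ⟨c, hc, hcA⟩ := exists_vecMul_featureMatrix_eq_hermVec (p := p) hPG
  obtain ⟨T, hTs, hGT⟩ := exists_hermVec_ne_zero hG hGp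
  exact exists_bounds_dotProduct_inv_gradedScale
    (posDef_gramMatrix_monomialFun (exponentsLE (Option (Fin d)) P.natDegree) one_ne_zero)
    (injective_featureMatrix_mulVec hP hp) hc hcA (v := Pi.single T 1)
    (fun β hβ ↦ featureMatrix_mulVec_single_eq_zero (hβ.trans_eq hTs.symm))
    (by rwa [dotProduct_single_one]) fun ε hε ↦ PhiMat_eval_eq P hε.le

end Feature

open Matrix in
/-- under Assumption A, for a nonzero polynomial g of total degree s ≤ p,
there exist c₁, c₂, ε₀ > 0 such that for all ε ∈ (0, ε₀), Φ(ε) is invertible and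
c₁ ε^{−s} ≤ ĝᵀ Φ(ε)⁻¹ ĝ ≤ c₂ ε^{−s}. -/
theorem stmt5 (d p : ℕ) (hd : 1 ≤ d) (hp : 1 ≤ p)
    (σ : ℝ → ℝ) (cf : Fin (p + 1) → ℝ) (hcf : ∀ k, cf k ≠ 0)
    (hσ : ∀ y, σ y = ∑ k : Fin (p + 1), cf k * y ^ (k : ℕ))
    (G : MvPolynomial (Fin d) ℝ) (hG : G ≠ 0) (hGdeg : G.totalDegree ≤ p) :
    ∃ c₁ > (0 : ℝ), ∃ c₂ > (0 : ℝ), ∃ ε₀ > (0 : ℝ), ∀ ε : ℝ, 0 < ε → ε < ε₀ →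
      IsUnit (PhiMat d p σ ε).det ∧
        c₁ * (ε ^ G.totalDegree)⁻¹ ≤
          hermVec d p G ⬝ᵥ ((PhiMat d p σ ε)⁻¹ *ᵥ hermVec d p G) ∧
        hermVec d p G ⬝ᵥ ((PhiMat d p σ ε)⁻¹ *ᵥ hermVec d p G) ≤
          c₂ * (ε ^ G.totalDegree)⁻¹ := by
  obtain ⟨P, hPdeg, hP, rfl⟩ := exists_polynomial_eval_eq_of_coeff_ne_zero hcf hσ
  obtain ⟨c₁, hc₁, c₂, hc₂, h⟩ := stmt5_general hPdeg hG hGdeg (hP _ hGdeg)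
  exact ⟨c₁, hc₁, c₂, hc₂, 1, one_pos, fun ε hε hε1 ↦ h ε hε hε1.le⟩
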